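/- (Mixed difference-differential equation for family V with (p,q,m) = (0,0,1).) Let λ, μ ∈ ℂ and for n ∈ ℕ set F_n(x) = ₂F₀(1−λ−n, μ+n; —; x) = Σ_{k≥0} (1−λ−n)_k·(μ+n)_k · x^k/k! ∈ ℂ[[x]]. Assume that (2n+λ+μ)(2n+λ+μ−1)(2n+λ+μ−2) ≠ 0 for every integer n ≥ 1. Then for every integer n ≥ 1, the identity −x²·F_n'(x) = ((n+μ)(n+λ−1)/((2n+λ+μ)(2n+λ+μ−1)))·F_{n+1}(x) − (2(n+μ)(n+λ−1)/((2n+λ+μ)(2n+λ+μ−2)))·F_n(x) + ((n+μ)(n+λ−1)/((2n+λ+μ−1)(2n+λ+μ−2)))·F_{n−1}(x) holds in ℂ[[x]], where ' denotes the formal derivative with respect to x. -/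

import Mathlib

noncomputable section

open PowerSeries

/-- Pochhammer symbol `(a)_k = a (a+1) ⋯ (a+k-1)`, with `(a)_0 = 1`. -/
def poch (a : ℂ) : ℕ → ℂ
  | 0 => 1
  | k + 1 => poch a k * (a + k)

/-- `F_n(x) = ₂F₀(1−λ−n, μ+n; —; x) = Σ_{k≥0} (1−λ−n)_k (μ+n)_k x^k/k!`. -/
def Fser (lam mu : ℂ) (n : ℕ) : PowerSeries ℂ :=
  PowerSeries.mk fun k =>
    poch (1 - lam - n) k * poch (mu + n) k / (Nat.factorial k : ℂ)

lemma poch_shift (a : ℂ) (k : ℕ) : poch a (k + 1) = a * poch (a + 1) k := by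
  induction k with
  | zero => simp [poch]
  | succ k ih =>
    rw [poch, ih, poch]
    push_cast
    ring

lemma poch_ids (a : ℂ) (j : ℕ) :
    poch a (j + 1) = a * poch (a + 1) j ∧
    poch a (j + 2) = a * poch (a + 1) j * (a + j + 1) ∧
    poch (a - 1) (j + 2) = (a - 1) * a * poch (a + 1) j ∧
    poch (a + 1) (j + 2) = poch (a + 1) j * (a + 1 + j) * (a + j + 2) := by
  refine ⟨poch_shift a j, ?_, ?_, ?_⟩
  · rw [poch, poch_shift]; push_cast; ring
  · rw [poch_shift, sub_add_cancel, poch_shift]; ring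
  · rw [poch, poch]; push_cast; ring

lemma key (a b : ℂ) (h0 : b - a + 1 ≠ 0) (h1 : b - a ≠ 0) (h2 : b - a - 1 ≠ 0) (k : ℕ) :
    -(coeff k (X ^ 2 * PowerSeries.derivativeFun
        (PowerSeries.mk fun k => poch a k * poch b k / (Nat.factorial k : ℂ)))) =
      (-(a * b)) / ((b - a + 1) * (b - a)) *
        (poch (a - 1) k * poch (b + 1) k / (Nat.factorial k : ℂ)) -
      (2 * (-(a * b))) / ((b - a + 1) * (b - a - 1)) *
        (poch a k * poch b k / (Nat.factorial k : ℂ)) +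
      (-(a * b)) / ((b - a) * (b - a - 1)) *
        (poch (a + 1) k * poch (b - 1) k / (Nat.factorial k : ℂ)) := by
  rw [PowerSeries.coeff_X_pow_mul']
  match k with
  | 0 => simp [poch]; field_simp; ring
  | 1 => simp [poch]; field_simp; ring
  | j + 2 =>
    obtain ⟨a1, a2, a3, a4⟩ := poch_ids a j
    obtain ⟨b1, b2, b3, b4⟩ := poch_ids b j
    have hd : ∀ f : PowerSeries ℂ, coeff j (PowerSeries.derivativeFun f) =
        coeff (j + 1) f * (j + 1) := fun f => PowerSeries.coeff_derivative f j
    rw [if_pos (by omega), Nat.add_sub_cancel, hd, coeff_mk,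
      a1, a2, a3, a4, b1, b2, b3, b4]
    have hj : (Nat.factorial j : ℂ) ≠ 0 := by exact_mod_cast Nat.factorial_ne_zero j
    have hj1 : (j : ℂ) + 1 ≠ 0 := by exact_mod_cast Nat.succ_ne_zero j
    have hj2 : (j : ℂ) + 1 + 1 ≠ 0 := by exact_mod_cast Nat.succ_ne_zero (j + 1)
    rw [Nat.factorial_succ (j + 1), Nat.factorial_succ j]
    push_cast
    generalize poch (a + 1) j = P
    generalize poch (b + 1) j = Q
    field_simp
    ring

/-- Mixed difference-differential equation for family V with `(p,q,m) = (0,0,1)`. -/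
theorem mixed_relation_family_V (lam mu : ℂ)
    (hden : ∀ n : ℕ, 1 ≤ n →
      (2 * (n : ℂ) + lam + mu) * (2 * (n : ℂ) + lam + mu - 1) *
        (2 * (n : ℂ) + lam + mu - 2) ≠ 0) :
    ∀ n : ℕ, 1 ≤ n →
      -(PowerSeries.X ^ 2 * PowerSeries.derivativeFun (Fser lam mu n)) =
        ((((n : ℂ) + mu) * ((n : ℂ) + lam - 1)) /
            ((2 * (n : ℂ) + lam + mu) * (2 * (n : ℂ) + lam + mu - 1))) •
            Fser lam mu (n + 1) -
          ((2 * (((n : ℂ) + mu) * ((n : ℂ) + lam - 1))) /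
            ((2 * (n : ℂ) + lam + mu) * (2 * (n : ℂ) + lam + mu - 2))) •
            Fser lam mu n +
          ((((n : ℂ) + mu) * ((n : ℂ) + lam - 1)) /
            ((2 * (n : ℂ) + lam + mu - 1) * (2 * (n : ℂ) + lam + mu - 2))) •
            Fser lam mu (n - 1) := by
  intro n hn
  obtain ⟨⟨h0, h1⟩, h2⟩ := (by simpa only [mul_ne_zero_iff] using hden n hn :
    (2 * (n : ℂ) + lam + mu ≠ 0 ∧ 2 * (n : ℂ) + lam + mu - 1 ≠ 0) ∧
      2 * (n : ℂ) + lam + mu - 2 ≠ 0)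
  have e0 : 2 * (n : ℂ) + lam + mu = (mu + n) - (1 - lam - n) + 1 := by ring
  have e1 : 2 * (n : ℂ) + lam + mu - 1 = (mu + n) - (1 - lam - n) := by ring
  have e2 : 2 * (n : ℂ) + lam + mu - 2 = (mu + n) - (1 - lam - n) - 1 := by ring
  have e3 : ((n : ℂ) + mu) * ((n : ℂ) + lam - 1) = -((1 - lam - n) * (mu + n)) := by ring
  have e4 : 1 - lam - ((n + 1 : ℕ) : ℂ) = 1 - lam - n - 1 := by push_cast; ring
  have e5 : mu + ((n + 1 : ℕ) : ℂ) = mu + n + 1 := by push_cast; ring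
  have e6 : 1 - lam - ((n - 1 : ℕ) : ℂ) = 1 - lam - n + 1 := by
    rw [Nat.cast_sub hn]; push_cast; ring
  have e7 : mu + ((n - 1 : ℕ) : ℂ) = mu + n - 1 := by
    rw [Nat.cast_sub hn]; push_cast; ring
  rw [e1, e2, e3, e0]
  rw [e1] at h1
  rw [e2] at h2
  rw [e0] at h0
  ext k
  have := key _ _ h0 h1 h2 k
  simp only [Fser, e4, e5, e6, e7, map_neg, map_add, map_sub, coeff_smul, smul_eq_mul]
  rw [this]
  simp only [coeff_mk]
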